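/- If q belongs to the class E, then a_2(n²) = O(1/n³) as n → ∞, where a_2(n²) = Σ_{(n_1,n_2) ∈ ℤ²} C_{n_1} C_{n_2} ( C_{n_1+n_2} − C_{n_1+n_2+2n} ) / ( [n² − (n+n_1)²][n² − (n+n_1+n_2)²] ), the sum being restricted to pairs with n_1 ∉ {0, −2n} and n_1 + n_2 ∉ {0, −2n}. -/

import Mathlib

open MeasureTheory Filter Asymptotics

/-- Cosine Fourier coefficients `C_k = (1/π) ∫₀^π q(x) cos(kx) dx`. -/
noncomputable def cosCoef (q : ℝ → ℂ) (k : ℤ) : ℂ :=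
  (1 / (Real.pi : ℂ)) * ∫ x in (0:ℝ)..Real.pi, q x * Real.cos ((k : ℝ) * x)

/-- `a₂(n²) = Σ C_{n₁} C_{n₂} (C_{n₁+n₂} − C_{n₁+n₂+2n}) / ([n²−(n+n₁)²][n²−(n+n₁+n₂)²])`,
over pairs with `n₁ ∉ {0, −2n}` and `n₁+n₂ ∉ {0, −2n}`. -/
noncomputable def a2sum (q : ℝ → ℂ) (n : ℕ) : ℂ :=
  ∑' v : ℤ × ℤ,
    if v.1 ≠ 0 ∧ v.1 ≠ -(2 * (n : ℤ)) ∧ v.1 + v.2 ≠ 0 ∧ v.1 + v.2 ≠ -(2 * (n : ℤ)) then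
      cosCoef q v.1 * cosCoef q v.2 *
        (cosCoef q (v.1 + v.2) - cosCoef q (v.1 + v.2 + 2 * n)) /
        ((((n : ℂ))^2 - ((n : ℂ) + (v.1 : ℂ))^2) *
          (((n : ℂ))^2 - ((n : ℂ) + (v.1 : ℂ) + (v.2 : ℂ))^2))
    else 0

/-- reciprocal absolute value -/
noncomputable def rr (k : ℤ) : ℝ := |(k : ℝ)|⁻¹

/-- sum of two reciprocals -/
noncomputable def AA (n : ℕ) (m : ℤ) : ℝ := rr m + rr (m + 2 * n)

/-- the majorant -/
noncomputable def HH (n : ℕ) (v : ℤ × ℤ) : ℝ :=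
  AA n v.1 ^ 2 * rr v.2 ^ 2 + AA n (v.1 + v.2) ^ 2 * rr v.2 ^ 2
    + 2 * (AA n v.1 ^ 2 * AA n (v.1 + v.2) ^ 2)

/-- the main term -/
noncomputable def FF (C : ℤ → ℂ) (v : ℤ × ℤ) : ℂ :=
  C v.1 * C v.2 * C (v.1 + v.2) / ((v.1 : ℂ) * ((v.1 : ℂ) + (v.2 : ℂ)))

lemma rr_nonneg (k : ℤ) : 0 ≤ rr k := by unfold rr; positivity

lemma AA_nonneg (n : ℕ) (k : ℤ) : 0 ≤ AA n k := add_nonneg (rr_nonneg _) (rr_nonneg _)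

lemma rr_summable : Summable (fun k : ℤ => rr k ^ 2) := by
  have h := (Real.summable_one_div_int_pow (p := 2)).2 (by norm_num)
  refine h.congr (fun k => ?_)
  simp [rr]

lemma rr_shift_summable (a : ℤ) : Summable (fun k : ℤ => rr (k + a) ^ 2) :=
  (Equiv.addRight a).summable_iff.2 rr_summable

lemma rr_shift_tsum (a : ℤ) : ∑' k : ℤ, rr (k + a) ^ 2 = ∑' k : ℤ, rr k ^ 2 :=
  (Equiv.addRight a).tsum_eq (fun k : ℤ => rr k ^ 2)

lemma AA_le (n : ℕ) (k : ℤ) : AA n k ^ 2 ≤ 2 * rr k ^ 2 + 2 * rr (k + 2 * n) ^ 2 := by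
  unfold AA; nlinarith [sq_nonneg (rr k - rr (k + 2 * n))]

lemma AA_summable (n : ℕ) : Summable (fun k : ℤ => AA n k ^ 2) :=
  Summable.of_nonneg_of_le (fun k => sq_nonneg _) (AA_le n)
    ((rr_summable.mul_left 2).add ((rr_shift_summable _).mul_left 2))

lemma AA_tsum (n : ℕ) : ∑' k : ℤ, AA n k ^ 2 ≤ 4 * ∑' k : ℤ, rr k ^ 2 := by
  have h := (AA_summable n).tsum_le_tsum (AA_le n)
    ((rr_summable.mul_left 2).add ((rr_shift_summable _).mul_left 2))
  rw [Summable.tsum_add (rr_summable.mul_left 2) ((rr_shift_summable _).mul_left 2),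
    tsum_mul_left, tsum_mul_left, rr_shift_tsum] at h
  linarith

/-- `(m,k) ↦ (m+k,k)` -/
def e1 : ℤ × ℤ ≃ ℤ × ℤ where
  toFun v := (v.1 + v.2, v.2)
  invFun v := (v.1 - v.2, v.2)
  left_inv v := by ext <;> simp
  right_inv v := by ext <;> simp

/-- `(m,k) ↦ (m,m+k)` -/
def e2 : ℤ × ℤ ≃ ℤ × ℤ where
  toFun v := (v.1, v.1 + v.2)
  invFun v := (v.1, v.2 - v.1)
  left_inv v := by ext <;> simp
  right_inv v := by ext <;> simp

/-- `(m,k) ↦ (k,-m-k)` -/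
def e3 : ℤ × ℤ ≃ ℤ × ℤ where
  toFun v := (v.2, -v.1 - v.2)
  invFun v := (-v.1 - v.2, v.1)
  left_inv v := by ext <;> simp; ring
  right_inv v := by ext <;> simp

lemma prod_hasSum {f g : ℤ → ℝ} (hf : Summable f) (hg : Summable g) (hf0 : ∀ k, 0 ≤ f k)
    (hg0 : ∀ k, 0 ≤ g k) :
    HasSum (fun v : ℤ × ℤ => f v.1 * g v.2) ((∑' k, f k) * ∑' k, g k) :=
  hf.hasSum.mul hg.hasSum (hf.mul_of_nonneg hg hf0 hg0)

lemma HH_hasSum (n : ℕ) : HasSum (HH n)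
    ((∑' k : ℤ, AA n k ^ 2) * (∑' k : ℤ, rr k ^ 2) + (∑' k : ℤ, AA n k ^ 2) * (∑' k : ℤ, rr k ^ 2)
      + 2 * ((∑' k : ℤ, AA n k ^ 2) * (∑' k : ℤ, AA n k ^ 2))) := by
  have h1 := prod_hasSum (AA_summable n) rr_summable (fun _ => sq_nonneg _) (fun _ => sq_nonneg _)
  have h2 := prod_hasSum (AA_summable n) (AA_summable n) (fun _ => sq_nonneg _)
    (fun _ => sq_nonneg _)
  have h1' := e1.hasSum_iff.2 h1
  have h2' := e2.hasSum_iff.2 h2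
  exact (h1.add h1').add (h2'.mul_left 2)

lemma HH_tsum (n : ℕ) : ∑' v, HH n v ≤ 40 * (∑' k : ℤ, rr k ^ 2) ^ 2 := by
  rw [(HH_hasSum n).tsum_eq]
  have h := AA_tsum n
  have h0 : 0 ≤ ∑' k : ℤ, AA n k ^ 2 := tsum_nonneg (fun _ => sq_nonneg _)
  have h1 : 0 ≤ ∑' k : ℤ, rr k ^ 2 := tsum_nonneg (fun _ => sq_nonneg _)
  nlinarith [mul_le_mul h h h0 (by positivity), mul_le_mul_of_nonneg_right h h1]

lemma rr_le_one (k : ℤ) : rr k ≤ 1 := by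
  unfold rr
  rcases eq_or_ne k 0 with rfl | h
  · simp
  · apply inv_le_one_of_one_le₀
    exact_mod_cast Int.one_le_abs h

lemma FF_norm_le {C : ℤ → ℂ} {M : ℝ} (hM : 0 ≤ M) (hC : ∀ k, ‖C k‖ ≤ M * rr k) (v : ℤ × ℤ) :
    ‖FF C v‖ ≤ M ^ 3 * (rr v.1 ^ 2 * rr v.2 * rr (v.1 + v.2) ^ 2) := by
  obtain ⟨m, k⟩ := v
  have h1 : ‖(m : ℂ)⁻¹‖ = rr m := by simp [rr]
  have h2 : ‖((m : ℂ) + (k : ℂ))⁻¹‖ = rr (m + k) := by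
    rw [norm_inv, ← Int.cast_add, Complex.norm_intCast]; rfl
  simp only [FF, norm_mul, div_eq_mul_inv, mul_inv, h1, h2]
  have a1 := rr_nonneg m
  have a2 := rr_nonneg k
  have a3 := rr_nonneg (m + k)
  calc _ ≤ (M * rr m) * (M * rr k) * (M * rr (m + k)) * (rr m * rr (m + k)) := by
        gcongr <;> apply hC
    _ = _ := by ring

lemma FF_summable {C : ℤ → ℂ} {M : ℝ} (hM : 0 ≤ M) (hC : ∀ k, ‖C k‖ ≤ M * rr k) :
    Summable (FF C) := by
  have h2 := (prod_hasSum rr_summable rr_summable (fun _ => sq_nonneg _) (fun _ => sq_nonneg _))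
  have h2' := (e2.hasSum_iff.2 h2).summable.mul_left (M ^ 3)
  refine Summable.of_norm_bounded h2' (fun v => (FF_norm_le hM hC v).trans ?_)
  have a2 := rr_nonneg v.2
  have a3 := rr_le_one v.2
  simp only [Function.comp, e2, Equiv.coe_fn_mk]
  gcongr
  exact mul_le_of_le_one_right (sq_nonneg _) a3

lemma FF_cyc {C : ℤ → ℂ} (h0 : C 0 = 0) (hev : ∀ k, C (-k) = C k) (v : ℤ × ℤ) :
    FF C v + FF C (e3 v) + FF C (e3 (e3 v)) = 0 := by
  obtain ⟨m, k⟩ := v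
  simp only [FF, e3, Equiv.coe_fn_mk]
  have q1 : C (-m - k) = C (m + k) := by rw [← hev]; congr 1; ring
  have q2 : C (k + (-m - k)) = C m := by rw [← hev]; congr 1; ring
  have q3 : C (-k - (-m - k)) = C m := by congr 1; ring
  have q4 : C (-m - k + (-k - (-m - k))) = C k := by rw [← hev]; congr 1; ring
  rw [q1, q2, q3, q4]
  by_cases hm : m = 0
  · simp [hm, h0]
  by_cases hk : k = 0
  · simp [hk, h0]
  by_cases hs : m + k = 0
  · simp [hs, h0]
  have hm' : (m : ℂ) ≠ 0 := by exact_mod_cast hm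
  have hk' : (k : ℂ) ≠ 0 := by exact_mod_cast hk
  have hs' : (m : ℂ) + k ≠ 0 := by exact_mod_cast hs
  push_cast
  have e1 : (k : ℂ) + (-m - k) = -m := by ring
  have e2 : (-m - k : ℂ) = -(m + k) := by ring
  have e4 : (-(m + k) + (-k - -(m + k)) : ℂ) = - k := by ring
  rw [e1, e2, e4]
  field_simp
  ring

lemma FF_tsum {C : ℤ → ℂ} {M : ℝ} (hM : 0 ≤ M) (hC : ∀ k, ‖C k‖ ≤ M * rr k)
    (h0 : C 0 = 0) (hev : ∀ k, C (-k) = C k) : ∑' v, FF C v = 0 := by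
  have hs := (FF_summable hM hC).hasSum
  have h1 := e3.hasSum_iff.2 hs
  have h2 := e3.hasSum_iff.2 h1
  have h := (hs.add h1).add h2
  have hz : HasSum (fun v : ℤ × ℤ => (0 : ℂ)) 0 := hasSum_zero
  have hfun : (fun b => FF C b + (FF C ∘ e3) b + ((FF C ∘ e3) ∘ e3) b) = fun _ => 0 :=
    funext (fun v => FF_cyc h0 hev v)
  rw [hfun] at h
  have := h.unique hz
  linear_combination this / 3

lemma key_real {x x' y y' z e : ℝ} (hx : 0 ≤ x) (hx' : 0 ≤ x') (hy : 0 ≤ y) (hy' : 0 ≤ y')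
    (hz : 0 ≤ z) (he : 0 ≤ e) (h1 : x * x' ≤ e * (x + x')) (h2 : y * y' ≤ e * (y + y'))
    (h3 : x * z * y' ≤ e * (x * z + z * y' + x * y')) :
    e ^ 2 * (x * z * y * (x * y' + x' * y + x' * y')) + x * z * y' * (x * x' * (y * y')) ≤
      2 * e ^ 3 * ((x + x') ^ 2 * z ^ 2 + (y + y') ^ 2 * z ^ 2
        + 2 * ((x + x') ^ 2 * (y + y') ^ 2)) := by
  obtain ⟨A, hA⟩ : ∃ A, A = x + x' := ⟨_, rfl⟩
  obtain ⟨B, hB⟩ : ∃ B, B = y + y' := ⟨_, rfl⟩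
  rw [← hA] at h1 ⊢
  rw [← hB] at h2 ⊢
  have xA : x ≤ A := by linarith
  have yB : y ≤ B := by linarith
  have x'A : x' ≤ A := by linarith
  have y'B : y' ≤ B := by linarith
  have A0 : 0 ≤ A := by linarith
  have B0 : 0 ≤ B := by linarith
  have t1 : x * z * y * (x * y') ≤ e * (A ^ 2 * z * B) :=
    calc x * z * y * (x * y') = x ^ 2 * z * (y * y') := by ring
      _ ≤ A ^ 2 * z * (e * B) := by gcongr
      _ = _ := by ring
  have t2 : x * z * y * (x' * y) ≤ e * (A * z * B ^ 2) :=
    calc x * z * y * (x' * y) = (x * x') * z * y ^ 2 := by ring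
      _ ≤ (e * A) * z * B ^ 2 := by gcongr
      _ = _ := by ring
  have t3 : x * z * y * (x' * y') ≤ e * (A * z * B ^ 2) :=
    calc x * z * y * (x' * y') = (x * x') * z * (y * y') := by ring
      _ ≤ (e * A) * z * (B * B) := by gcongr
      _ = _ := by ring
  have t4 : x * z * y' * (x * x' * (y * y')) ≤ e ^ 3 * ((A * z + z * B + A * B) * (A * B)) :=
    calc x * z * y' * (x * x' * (y * y'))
        ≤ (e * (x * z + z * y' + x * y')) * ((e * A) * (e * B)) := by gcongr
      _ ≤ (e * (A * z + z * B + A * B)) * ((e * A) * (e * B)) := by gcongr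
      _ = _ := by ring
  have t5 : e ^ 2 * (x * z * y * (x * y' + x' * y + x' * y')) ≤
      e ^ 2 * (e * (A ^ 2 * z * B) + e * (A * z * B ^ 2) + e * (A * z * B ^ 2)) := by
    gcongr; linarith
  have t6 : 0 ≤ e ^ 3 * (A ^ 2 * (z - B) ^ 2) := by positivity
  have t7 : 0 ≤ e ^ 3 * (B ^ 2 * (z - A) ^ 2) := by positivity
  have t8 : 0 ≤ e ^ 3 * (A ^ 2 * B ^ 2) := by positivity
  have t9 : 0 ≤ e ^ 3 * (A ^ 2 * z ^ 2) := by positivity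
  have t10 : 0 ≤ e ^ 3 * (B ^ 2 * z ^ 2) := by positivity
  nlinarith

/-- the summand -/
noncomputable def TT (C : ℤ → ℂ) (n : ℕ) (v : ℤ × ℤ) : ℂ :=
    if v.1 ≠ 0 ∧ v.1 ≠ -(2 * (n : ℤ)) ∧ v.1 + v.2 ≠ 0 ∧ v.1 + v.2 ≠ -(2 * (n : ℤ)) then
      C v.1 * C v.2 *
        (C (v.1 + v.2) - C (v.1 + v.2 + 2 * n)) /
        ((((n : ℂ))^2 - ((n : ℂ) + (v.1 : ℂ))^2) *
          (((n : ℂ))^2 - ((n : ℂ) + (v.1 : ℂ) + (v.2 : ℂ))^2))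
    else 0

lemma rr_mul_le {n : ℕ} (hn : 0 < n) {m : ℤ} (hm : m ≠ 0) (hm' : m + 2 * n ≠ 0) :
    rr m * rr (m + 2 * n) ≤ (2 * (n : ℝ))⁻¹ * (rr m + rr (m + 2 * n)) := by
  unfold rr
  have h1 : 0 < |(m : ℝ)| := by simpa using hm
  have h2 : 0 < |((m + 2 * n : ℤ) : ℝ)| := by rw [abs_pos]; exact_mod_cast hm'
  have h3 : 2 * (n : ℝ) ≤ |((m + 2 * n : ℤ) : ℝ)| + |(m : ℝ)| := by
    push_cast
    have a := le_abs_self ((m : ℝ) + 2 * n)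
    have b := neg_abs_le (m : ℝ)
    linarith
  have hn' : (0 : ℝ) < n := by exact_mod_cast hn
  generalize |((m + 2 * n : ℤ) : ℝ)| = b at *
  generalize |(m : ℝ)| = a at *
  have : (2 * (n : ℝ))⁻¹ * (a⁻¹ + b⁻¹) - a⁻¹ * b⁻¹
      = (b + a - 2 * n) * ((2 * (n : ℝ))⁻¹ * a⁻¹ * b⁻¹) := by
    field_simp
  have h4 : 0 ≤ (b + a - 2 * n) * ((2 * (n : ℝ))⁻¹ * a⁻¹ * b⁻¹) :=
    mul_nonneg (by linarith) (by positivity)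
  linarith

lemma rr_mul3_le {n : ℕ} (hn : 0 < n) {m k : ℤ} (hm : m ≠ 0) (hk : k ≠ 0)
    (hs : m + k + 2 * n ≠ 0) :
    rr m * rr k * rr (m + k + 2 * n) ≤ (2 * (n : ℝ))⁻¹ *
      (rr m * rr k + rr k * rr (m + k + 2 * n) + rr m * rr (m + k + 2 * n)) := by
  unfold rr
  have h1 : 0 < |(m : ℝ)| := by simpa using hm
  have h1' : 0 < |(k : ℝ)| := by simpa using hk
  have h2 : 0 < |((m + k + 2 * n : ℤ) : ℝ)| := by rw [abs_pos]; exact_mod_cast hs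
  have h3 : 2 * (n : ℝ) ≤ |((m + k + 2 * n : ℤ) : ℝ)| + |(m : ℝ)| + |(k : ℝ)| := by
    push_cast
    have a := le_abs_self ((m : ℝ) + k + 2 * n)
    have b := neg_abs_le (m : ℝ)
    have c := neg_abs_le (k : ℝ)
    linarith
  have hn' : (0 : ℝ) < n := by exact_mod_cast hn
  generalize |((m + k + 2 * n : ℤ) : ℝ)| = b at *
  generalize |(m : ℝ)| = a at *
  generalize |(k : ℝ)| = c at *
  have : (2 * (n : ℝ))⁻¹ * (a⁻¹ * c⁻¹ + c⁻¹ * b⁻¹ + a⁻¹ * b⁻¹) - a⁻¹ * c⁻¹ * b⁻¹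
      = (b + a + c - 2 * n) * ((2 * (n : ℝ))⁻¹ * a⁻¹ * b⁻¹ * c⁻¹) := by
    field_simp
  have h4 : 0 ≤ (b + a + c - 2 * n) * ((2 * (n : ℝ))⁻¹ * a⁻¹ * b⁻¹ * c⁻¹) :=
    mul_nonneg (by linarith) (by positivity)
  linarith

lemma HH_nonneg (n : ℕ) (v : ℤ × ℤ) : 0 ≤ HH n v := by unfold HH; positivity

lemma generic_identity (N m s c1 c2 c3 c4 : ℂ) (hN : N ≠ 0) (hm : m ≠ 0) (hm' : m + N ≠ 0)
    (hs : s ≠ 0) (hs' : s + N ≠ 0) :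
    c1 * c2 * (c3 - c4) / ((m * (m + N)) * (s * (s + N))) - N⁻¹ ^ 2 * (c1 * c2 * c3 / (m * s))
    = N⁻¹ ^ 2 * (c1 * c2 * c3 * ((m + N)⁻¹ * (s + N)⁻¹ - m⁻¹ * (s + N)⁻¹ - (m + N)⁻¹ * s⁻¹))
      - c1 * c2 * c4 * (m⁻¹ * (m + N)⁻¹ * (s⁻¹ * (s + N)⁻¹)) := by
  field_simp
  ring

lemma pointwise {C : ℤ → ℂ} {M : ℝ} (hM : 0 ≤ M) (hC : ∀ k, ‖C k‖ ≤ M * rr k)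
    (h0 : C 0 = 0) {n : ℕ} (hn : 0 < n) (v : ℤ × ℤ) :
    ‖TT C n v - (2 * (n : ℂ))⁻¹ ^ 2 * FF C v‖ ≤ 2 * M ^ 3 * (2 * (n : ℝ))⁻¹ ^ 3 * HH n v := by
  have hHH := HH_nonneg n v
  have hF := FF_norm_le hM hC v
  obtain ⟨m, k⟩ := v
  simp only at hF
  have hn' : (0 : ℝ) < n := by exact_mod_cast hn
  have he : 0 ≤ (2 * (n : ℝ))⁻¹ := by positivity
  have hne : ‖(2 * (n : ℂ))⁻¹‖ = (2 * (n : ℝ))⁻¹ := by simp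
  have a1 := rr_nonneg m
  have a2 := rr_nonneg k
  have a3 := rr_nonneg (m + k)
  have a4 := rr_nonneg (m + 2 * n)
  have a5 := rr_nonneg (m + k + 2 * n)
  have rN : rr (-(2 * (n : ℤ))) = (2 * (n : ℝ))⁻¹ := by
    simp [rr]
  by_cases hm : m = 0
  · subst hm
    have : TT C n (0, k) - (2 * (n : ℂ))⁻¹ ^ 2 * FF C (0, k) = 0 := by simp [TT, FF]
    rw [this, norm_zero]; positivity
  by_cases hs : m + k = 0
  · have : TT C n (m, k) - (2 * (n : ℂ))⁻¹ ^ 2 * FF C (m, k) = 0 := by simp [TT, FF, hs, h0]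
    rw [this, norm_zero]; positivity
  by_cases hk : k = 0
  · have : TT C n (m, k) - (2 * (n : ℂ))⁻¹ ^ 2 * FF C (m, k) = 0 := by simp [TT, FF, hk, h0]
    rw [this, norm_zero]; positivity
  have xA : rr m ≤ AA n m := by unfold AA; linarith
  have yB : rr (m + k) ≤ AA n (m + k) := by unfold AA; linarith
  have A0 := AA_nonneg n m
  have B0 := AA_nonneg n (m + k)
  by_cases hm' : m = -(2 * (n : ℤ))
  · have hT : TT C n (m, k) = 0 := by simp [TT, hm']
    rw [hT, zero_sub, norm_neg, norm_mul, norm_pow, hne]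
    have hr : rr m = (2 * (n : ℝ))⁻¹ := by rw [hm', rN]
    calc _ ≤ (2 * (n : ℝ))⁻¹ ^ 2 * (M ^ 3 * (rr m ^ 2 * rr k * rr (m + k) ^ 2)) := by gcongr
      _ = M ^ 3 * (2 * (n : ℝ))⁻¹ ^ 3 * (rr m * rr k * rr (m + k) ^ 2) := by
          rw [← hr]; ring
      _ ≤ M ^ 3 * (2 * (n : ℝ))⁻¹ ^ 3 * (AA n m * rr k * AA n (m + k) ^ 2) := by gcongr
      _ ≤ M ^ 3 * (2 * (n : ℝ))⁻¹ ^ 3 * (2 * HH n (m, k)) := by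
          refine mul_le_mul_of_nonneg_left ?_ (by positivity)
          simp only [HH]
          have t7 : 0 ≤ AA n (m + k) ^ 2 * (rr k - AA n m) ^ 2 := by positivity
          have t8 : 0 ≤ AA n m ^ 2 * AA n (m + k) ^ 2 := by positivity
          have t9 : 0 ≤ AA n m ^ 2 * rr k ^ 2 := by positivity
          have t10 : 0 ≤ AA n (m + k) ^ 2 * rr k ^ 2 := by positivity
          nlinarith
      _ = _ := by ring
  by_cases hs' : m + k = -(2 * (n : ℤ))
  · have hT : TT C n (m, k) = 0 := by simp [TT, hs']
    rw [hT, zero_sub, norm_neg, norm_mul, norm_pow, hne]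
    have hr : rr (m + k) = (2 * (n : ℝ))⁻¹ := by rw [hs', rN]
    calc _ ≤ (2 * (n : ℝ))⁻¹ ^ 2 * (M ^ 3 * (rr m ^ 2 * rr k * rr (m + k) ^ 2)) := by gcongr
      _ = M ^ 3 * (2 * (n : ℝ))⁻¹ ^ 3 * (rr m ^ 2 * rr k * rr (m + k)) := by
          rw [← hr]; ring
      _ ≤ M ^ 3 * (2 * (n : ℝ))⁻¹ ^ 3 * (AA n m ^ 2 * rr k * AA n (m + k)) := by gcongr
      _ ≤ M ^ 3 * (2 * (n : ℝ))⁻¹ ^ 3 * (2 * HH n (m, k)) := by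
          refine mul_le_mul_of_nonneg_left ?_ (by positivity)
          simp only [HH]
          have t7 : 0 ≤ AA n m ^ 2 * (rr k - AA n (m + k)) ^ 2 := by positivity
          have t8 : 0 ≤ AA n m ^ 2 * AA n (m + k) ^ 2 := by positivity
          have t9 : 0 ≤ AA n m ^ 2 * rr k ^ 2 := by positivity
          have t10 : 0 ≤ AA n (m + k) ^ 2 * rr k ^ 2 := by positivity
          nlinarith
      _ = _ := by ring
  have hmN : m + 2 * n ≠ 0 := fun h => hm' (by linarith)
  have hsN : m + k + 2 * n ≠ 0 := fun h => hs' (by linarith)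
  have cm : (m : ℂ) ≠ 0 := by exact_mod_cast hm
  have cs : (m : ℂ) + k ≠ 0 := by exact_mod_cast hs
  have cmN : (m : ℂ) + 2 * n ≠ 0 := by exact_mod_cast hmN
  have csN : (m : ℂ) + k + 2 * n ≠ 0 := by exact_mod_cast hsN
  have cN : 2 * (n : ℂ) ≠ 0 := by
    have : (n : ℂ) ≠ 0 := by exact_mod_cast hn.ne'
    simpa using this
  have hkey := key_real a1 a4 a3 a5 a2 he (rr_mul_le hn hm hmN) (rr_mul_le hn hs hsN)
    (rr_mul3_le hn hm hk hsN)
  have i1 : ‖(m : ℂ)⁻¹‖ = rr m := by simp [rr]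
  have i2 : ‖((m : ℂ) + k)⁻¹‖ = rr (m + k) := by
    rw [norm_inv, ← Int.cast_add, Complex.norm_intCast]; rfl
  have i3 : ‖((m : ℂ) + 2 * n)⁻¹‖ = rr (m + 2 * n) := by
    have : ((m : ℂ) + 2 * n) = ((m + 2 * n : ℤ) : ℂ) := by push_cast; ring
    rw [norm_inv, this, Complex.norm_intCast]; rfl
  have i4 : ‖((m : ℂ) + k + 2 * n)⁻¹‖ = rr (m + k + 2 * n) := by
    have : ((m : ℂ) + k + 2 * n) = ((m + k + 2 * n : ℤ) : ℂ) := by push_cast; ring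
    rw [norm_inv, this, Complex.norm_intCast]; rfl
  have hT : TT C n (m, k) = C m * C k * (C (m + k) - C (m + k + 2 * n)) /
      (((m : ℂ) * (m + 2 * n)) * ((m + k) * (m + k + 2 * n))) := by
    simp only [TT]
    rw [if_pos ⟨hm, hm', hs, hs'⟩]
    congr 1
    ring
  rw [hT]
  simp only [FF]
  rw [generic_identity _ _ _ _ _ _ _ cN cm cmN cs csN]
  refine (norm_sub_le _ _).trans ?_
  have b1 : ‖((m : ℂ) + 2 * n)⁻¹ * ((m : ℂ) + k + 2 * n)⁻¹ - (m : ℂ)⁻¹ * ((m : ℂ) + k + 2 * n)⁻¹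
      - ((m : ℂ) + 2 * n)⁻¹ * ((m : ℂ) + k)⁻¹‖ ≤
      rr m * rr (m + k + 2 * n) + rr (m + 2 * n) * rr (m + k)
        + rr (m + 2 * n) * rr (m + k + 2 * n) := by
    refine (norm_sub_le _ _).trans ?_
    refine (add_le_add_left (norm_sub_le _ _) _).trans ?_
    rw [norm_mul, norm_mul, norm_mul, i1, i2, i3, i4]
    linarith
  simp only [norm_mul, norm_pow, hne, i1, i2, i3, i4] at b1 ⊢
  calc _ ≤ (2 * (n : ℝ))⁻¹ ^ 2 * ((M * rr m) * (M * rr k) * (M * rr (m + k)) *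
          (rr m * rr (m + k + 2 * n) + rr (m + 2 * n) * rr (m + k)
          + rr (m + 2 * n) * rr (m + k + 2 * n)))
        + (M * rr m) * (M * rr k) * (M * rr (m + k + 2 * n)) *
          (rr m * rr (m + 2 * n) * (rr (m + k) * rr (m + k + 2 * n))) := by
        gcongr <;> apply hC
    _ = M ^ 3 * ((2 * (n : ℝ))⁻¹ ^ 2 * (rr m * rr k * rr (m + k) *
          (rr m * rr (m + k + 2 * n) + rr (m + 2 * n) * rr (m + k)
          + rr (m + 2 * n) * rr (m + k + 2 * n)))
        + rr m * rr k * rr (m + k + 2 * n) *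
          (rr m * rr (m + 2 * n) * (rr (m + k) * rr (m + k + 2 * n)))) := by ring
    _ ≤ M ^ 3 * (2 * (2 * (n : ℝ))⁻¹ ^ 3 * HH n (m, k)) := by
        gcongr
        exact hkey
    _ = _ := by ring

lemma main_bound {C : ℤ → ℂ} {M : ℝ} (hM : 0 ≤ M) (hC : ∀ k, ‖C k‖ ≤ M * rr k)
    (h0 : C 0 = 0) (hev : ∀ k, C (-k) = C k) {n : ℕ} (hn : 0 < n) :
    ‖∑' v, TT C n v‖ ≤ 2 * M ^ 3 * (2 * (n : ℝ))⁻¹ ^ 3 * (40 * (∑' k : ℤ, rr k ^ 2) ^ 2) := by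
  have hH := (HH_hasSum n).summable.mul_left (2 * M ^ 3 * (2 * (n : ℝ))⁻¹ ^ 3)
  have hE := Summable.of_norm_bounded hH (pointwise hM hC h0 hn)
  have hF := (FF_summable hM hC).mul_left ((2 * (n : ℂ))⁻¹ ^ 2)
  have h1 : ∑' v, TT C n v = ∑' v, (TT C n v - (2 * (n : ℂ))⁻¹ ^ 2 * FF C v) := by
    have h := hE.tsum_add hF
    rw [tsum_mul_left, FF_tsum hM hC h0 hev, mul_zero, add_zero] at h
    rw [← h]
    simp
  rw [h1]
  refine (tsum_of_norm_bounded hH.hasSum (pointwise hM hC h0 hn)).trans ?_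
  rw [tsum_mul_left]
  gcongr
  exact HH_tsum n

/-- If `q` belongs to the class `E` (i.e. `C_n = O(1/n)` and `C₀ = 0`),
then `a₂(n²) = O(1/n³)` as `n → ∞`. -/
theorem stmt15 (q : ℝ → ℂ)
    (hint : IntervalIntegrable q volume 0 Real.pi)
    (hC0 : cosCoef q 0 = 0)
    (hE : (fun n : ℕ => cosCoef q (n : ℤ)) =O[atTop] fun n : ℕ => (1 : ℝ) / n) :
    (fun n : ℕ => a2sum q n) =O[atTop] fun n : ℕ => 1 / (n : ℝ)^3 := by
  have hev : ∀ k, cosCoef q (-k) = cosCoef q k := by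
    intro k
    simp [cosCoef]
  obtain ⟨M, hM, hb⟩ := bound_of_isBigO_nat_atTop hE
  have hnat : ∀ k : ℕ, ‖cosCoef q (k : ℤ)‖ ≤ M * rr k := by
    intro k
    rcases Nat.eq_zero_or_pos k with rfl | hk
    · simp [hC0, rr]
    · have hk' : (k : ℝ) ≠ 0 := by exact_mod_cast hk.ne'
      have := hb (x := k) (by simpa using hk')
      simpa [rr] using this
  have hC : ∀ k, ‖cosCoef q k‖ ≤ M * rr k := by
    intro k
    obtain ⟨j, rfl | rfl⟩ := k.eq_nat_or_neg
    · exact hnat j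
    · rw [hev]
      have : rr (-(j : ℤ)) = rr j := by simp [rr]
      rw [this]
      exact hnat j
  refine IsBigO.of_bound (2 * M ^ 3 * 2⁻¹ ^ 3 * (40 * (∑' k : ℤ, rr k ^ 2) ^ 2)) ?_
  filter_upwards [eventually_gt_atTop 0] with n hn
  have h := main_bound hM.le hC hC0 hev hn
  have hT : a2sum q n = ∑' v, TT (cosCoef q) n v := rfl
  rw [hT]
  refine h.trans (le_of_eq ?_)
  rw [Real.norm_of_nonneg (by positivity), mul_inv, mul_pow, one_div, inv_pow (n : ℝ)]
  ring
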